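/- arXiv:1510.03141 — 3 statements merged into one kernel-verified Lean document; each statement's English description precedes it below -/
import Mathlib

section
/- Let d ∈ ℕ, p ∈ ℕ₀, C > 0, h ∈ [1, ∞], Q ∈ ℕ, and let a : [0,1]^d → ℝ be (p+1, C)-smooth with respect to the norm |·|_h. Then there exists a function g : [0,1]^d → ℝ which, on each cube of the equidistant partition of [0,1]^d into Q^d congruent subcubes of side length 1/Q, coincides with a polynomial of total degree at most p (namely, the degree-p Taylor polynomial of a around the midpoint of the cube), such that sup_{x ∈ [0,1]^d} |a(x) − g(x)| ≤ ( C / ( d^{1 − 1/h} (p+1)! ) ) · ( d / (2Q) )^{p+1}. -/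
open scoped ENNReal

/-- The `|·|_h` norm on `ℝ^d`, `h ∈ [1,∞]`: `|x|_h = (Σ|x_i|^h)^{1/h}`, `|x|_∞ = max |x_i|`. -/
noncomputable def pnorm (d : ℕ) (h : ℝ≥0∞) (x : Fin d → ℝ) : ℝ :=
  if h = ∞ then ⨆ i, |x i| else (∑ i, |x i| ^ h.toReal) ^ (1 / h.toReal)

/-- The partial derivative in the `i`-th coordinate. -/
noncomputable def partialDerivCoord (d : ℕ) (i : Fin d) (g : (Fin d → ℝ) → ℝ) :
    (Fin d → ℝ) → ℝ :=
  fun x => deriv (fun t => g (Function.update x i t)) (x i)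

/-- The multi-index partial derivative `∂_α = Π_i (∂/∂x_i)^{α_i}`. -/
noncomputable def partialDerivMulti (d : ℕ) (α : Fin d → ℕ) (g : (Fin d → ℝ) → ℝ) :
    (Fin d → ℝ) → ℝ :=
  (List.finRange d).foldr (fun i g' => (partialDerivCoord d i)^[α i] g') g

/-!
Around the midpoint `m` of a subcube, Taylor's formula with integral remainder for the derivative
of order `p` gives, with `z = x - m`,
`a (m + z) - T (m + z) = ∫₀¹ (1 - t)^(p-1) / (p-1)! * (D^p a (m + t z) - D^p a m) (z, …, z) dt`
for `p ≥ 1`. Expanding `D^p` in the standard basis turns its values on basis vectors into the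
partial derivatives `∂_α a` with `|α| = p`, so the integrand's last factor is at most
`t * C * |z|_h * |z|_1 ^ p`, and `∫₀¹ t (1 - t)^(p-1) / (p-1)! dt = 1 / (p+1)!`. The bound follows
from `|z|_1 ≤ d / (2Q)` and `|z|_h ≤ d^(1/h) / (2Q)`.
-/

section Taylor

variable {E F : Type*} [NormedAddCommGroup E] [NormedSpace ℝ E] [NormedAddCommGroup F]
  [NormedSpace ℝ F]

theorem integral_one_sub_pow (n : ℕ) : ∫ t in (0 : ℝ)..1, (1 - t) ^ n = ((n : ℝ) + 1)⁻¹ := by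
  rw [intervalIntegral.integral_comp_sub_left (fun t : ℝ => t ^ n) 1]
  simp

theorem integral_one_sub_pow_mul (n : ℕ) :
    ∫ t in (0 : ℝ)..1, (1 - t) ^ n * t = (((n : ℝ) + 1) * (n + 2))⁻¹ := by
  calc ∫ t in (0 : ℝ)..1, (1 - t) ^ n * t
      = ∫ t in (0 : ℝ)..1, ((1 - t) ^ n - (1 - t) ^ (n + 1)) :=
        intervalIntegral.integral_congr fun t _ => by ring
    _ = ((n : ℝ) + 1)⁻¹ - ((n : ℝ) + 1 + 1)⁻¹ := by
        rw [intervalIntegral.integral_sub (Continuous.intervalIntegrable (by fun_prop) _ _)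
          (Continuous.intervalIntegrable (by fun_prop) _ _), integral_one_sub_pow,
          integral_one_sub_pow, Nat.cast_succ]
    _ = (((n : ℝ) + 1) * (n + 2))⁻¹ := by
        have : (n : ℝ) + 1 ≠ 0 := by positivity
        have : (n : ℝ) + 2 ≠ 0 := by positivity
        have : (n : ℝ) + 1 + 1 ≠ 0 := by positivity
        field_simp
        ring

theorem norm_integral_one_sub_pow_smul_le {g : ℝ → F} {K : ℝ} (n : ℕ)
    (hg : ∀ t ∈ Set.Icc (0 : ℝ) 1, ‖g t‖ ≤ K * t) :
    ‖∫ t in (0 : ℝ)..1, (1 - t) ^ n • g t‖ ≤ K * (((n : ℝ) + 1) * (n + 2))⁻¹ := by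
  calc ‖∫ t in (0 : ℝ)..1, (1 - t) ^ n • g t‖
      ≤ ∫ t in (0 : ℝ)..1, K * ((1 - t) ^ n * t) := by
        refine intervalIntegral.norm_integral_le_of_norm_le zero_le_one
          (Filter.Eventually.of_forall fun t ht => ?_)
          (Continuous.intervalIntegrable (by fun_prop) _ _)
        have h1t : 0 ≤ (1 - t) ^ n := pow_nonneg (sub_nonneg.2 ht.2) n
        rw [norm_smul, Real.norm_of_nonneg h1t, mul_left_comm]
        exact mul_le_mul_of_nonneg_left (hg t ⟨ht.1.le, ht.2⟩) h1t
    _ = K * (((n : ℝ) + 1) * (n + 2))⁻¹ := by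
        rw [intervalIntegral.integral_const_mul, integral_one_sub_pow_mul]

theorem continuousOn_iteratedFDeriv_comp_add_smul {f : E → F} {x y : E} {n : ℕ} {s : Set ℝ}
    (hf : ∀ t ∈ s, ContDiffAt ℝ n f (x + t • y)) :
    ContinuousOn (fun t : ℝ => iteratedFDeriv ℝ n f (x + t • y) fun _ => y) s := fun t ht =>
  have hc : ContinuousAt (iteratedFDeriv ℝ n f) (x + t • y) :=
    ((hf t ht).iteratedFDeriv_right (m := 0) (by simp)).continuousAt
  ((hc.comp (f := fun t : ℝ => x + t • y) (by fun_prop)).continuousWithinAt).eval_const _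

theorem map_add_sub_taylor_eq_integral [CompleteSpace F] {f : E → F} {x y : E} {n : ℕ}
    (hf : ∀ t ∈ Set.Icc (0 : ℝ) 1, ContDiffAt ℝ (n + 1) f (x + t • y)) :
    f (x + y) - ∑ k ∈ Finset.range (n + 2),
        (k.factorial : ℝ)⁻¹ • iteratedFDeriv ℝ k f x (fun _ => y) =
      (n.factorial : ℝ)⁻¹ • ∫ t in (0 : ℝ)..1, (1 - t) ^ n •
        (iteratedFDeriv ℝ (n + 1) f (x + t • y) (fun _ => y) -
          iteratedFDeriv ℝ (n + 1) f x fun _ => y) := by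
  have hcont := continuousOn_iteratedFDeriv_comp_add_smul (n := n + 1) hf
  rw [map_add_eq_sum_add_integral_iteratedFDeriv hf, Finset.sum_range_succ _ (n + 1),
    add_sub_add_left_eq_sub]
  simp_rw [smul_sub]
  rw [intervalIntegral.integral_sub, smul_sub, intervalIntegral.integral_smul_const,
    integral_one_sub_pow, smul_smul, ← mul_inv, Nat.factorial_succ, Nat.cast_mul, Nat.cast_succ,
    mul_comm (n.factorial : ℝ)]
  · refine ContinuousOn.intervalIntegrable_of_Icc zero_le_one ?_
    exact ContinuousOn.smul (by fun_prop) hcont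
  · exact Continuous.intervalIntegrable (by fun_prop) _ _

theorem norm_map_add_sub_taylor_le [CompleteSpace F] {f : E → F} {x y : E} {n : ℕ} {K : ℝ}
    (hf : ∀ t ∈ Set.Icc (0 : ℝ) 1, ContDiffAt ℝ n f (x + t • y))
    (hK : ∀ t ∈ Set.Icc (0 : ℝ) 1,
      ‖iteratedFDeriv ℝ n f (x + t • y) (fun _ => y) - iteratedFDeriv ℝ n f x fun _ => y‖ ≤
        K * t) :
    ‖f (x + y) - ∑ k ∈ Finset.range (n + 1),
        (k.factorial : ℝ)⁻¹ • iteratedFDeriv ℝ k f x (fun _ => y)‖ ≤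
      K / (n + 1).factorial := by
  cases n with
  | zero => simpa using hK 1 ⟨zero_le_one, le_rfl⟩
  | succ n =>
    rw [map_add_sub_taylor_eq_integral hf, norm_smul, norm_inv, Real.norm_natCast]
    calc (n.factorial : ℝ)⁻¹ * ‖_‖
        ≤ (n.factorial : ℝ)⁻¹ * (K * (((n : ℝ) + 1) * (n + 2))⁻¹) := by
          gcongr
          exact norm_integral_one_sub_pow_smul_le n hK
      _ = K / (n + 1 + 1).factorial := by
          rw [Nat.factorial_succ, Nat.factorial_succ]
          push_cast
          field_simp
          ring

end Taylor

section Multilinear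

variable {ι R M : Type*} [Fintype ι] [DecidableEq ι] {n : ℕ}

theorem multilinearMap_apply_diag_eq_sum [CommSemiring R] [AddCommMonoid M] [Module R M]
    (f : MultilinearMap R (fun _ : Fin n => ι → R) M) (z : ι → R) :
    f (fun _ => z) = ∑ r : Fin n → ι, (∏ k, z (r k)) • f fun k => Pi.single (r k) 1 := by
  conv_lhs => rw [pi_eq_sum_univ' z, f.map_sum]
  simp_rw [f.map_smul_univ]

theorem norm_multilinearMap_apply_diag_le [NormedField R] [SeminormedAddCommGroup M]
    [NormedSpace R M] (f : MultilinearMap R (fun _ : Fin n => ι → R) M) {B : ℝ}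
    (hB : ∀ r : Fin n → ι, ‖f fun k => Pi.single (r k) 1‖ ≤ B) (z : ι → R) :
    ‖f fun _ => z‖ ≤ (∑ i, ‖z i‖) ^ n * B := by
  rw [multilinearMap_apply_diag_eq_sum, Fintype.sum_pow, Finset.sum_mul]
  refine norm_sum_le_of_le _ fun r _ => ?_
  rw [norm_smul, norm_prod]
  exact mul_le_mul_of_nonneg_left (hB r) (by positivity)

/-- The polynomial `x ↦ f (x - m, …, x - m)` attached to a multilinear map `f` on `R^ι` and a
centre `m`; it encodes the homogeneous terms of a Taylor expansion around `m`. -/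
noncomputable def diagPolynomial [CommRing R] (f : MultilinearMap R (fun _ : Fin n => ι → R) R)
    (m : ι → R) : MvPolynomial ι R :=
  ∑ r : Fin n → ι, MvPolynomial.C (f fun k => Pi.single (r k) 1) *
    ∏ k, (MvPolynomial.X (r k) - MvPolynomial.C (m (r k)))

theorem eval_diagPolynomial [CommRing R] (f : MultilinearMap R (fun _ : Fin n => ι → R) R)
    (m x : ι → R) : MvPolynomial.eval x (diagPolynomial f m) = f fun _ => x - m := by
  simp [diagPolynomial, multilinearMap_apply_diag_eq_sum f (x - m), mul_comm]

theorem totalDegree_diagPolynomial_le [CommRing R]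
    (f : MultilinearMap R (fun _ : Fin n => ι → R) R) (m : ι → R) :
    (diagPolynomial f m).totalDegree ≤ n := by
  refine MvPolynomial.totalDegree_finsetSum_le fun r _ => ?_
  calc _ ≤ 0 + ∑ _k : Fin n, 1 := by
        refine (MvPolynomial.totalDegree_mul _ _).trans (add_le_add ?_ ?_)
        · rw [MvPolynomial.totalDegree_C]
        · exact (MvPolynomial.totalDegree_finsetProd _ _).trans
            (Finset.sum_le_sum fun k _ => (MvPolynomial.totalDegree_sub_C_le _ _).trans
              ((MvPolynomial.totalDegree_monomial_le _ _).trans_eq (by simp)))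
    _ = n := by simp

/-- The degree-`p` Taylor polynomial of `f` around `m`, as a polynomial in `x` (not in `x - m`). -/
noncomputable def taylorPolynomial (f : (ι → ℝ) → ℝ) (p : ℕ) (m : ι → ℝ) : MvPolynomial ι ℝ :=
  ∑ j ∈ Finset.range (p + 1), (j.factorial : ℝ)⁻¹ •
    diagPolynomial (iteratedFDeriv ℝ j f m).toMultilinearMap m

theorem eval_taylorPolynomial (f : (ι → ℝ) → ℝ) (p : ℕ) (m x : ι → ℝ) :
    MvPolynomial.eval x (taylorPolynomial f p m) =
      ∑ j ∈ Finset.range (p + 1),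
        (j.factorial : ℝ)⁻¹ • iteratedFDeriv ℝ j f m (fun _ => x - m) := by
  simp [taylorPolynomial, eval_diagPolynomial, MvPolynomial.smul_eval]

theorem totalDegree_taylorPolynomial_le (f : (ι → ℝ) → ℝ) (p : ℕ) (m : ι → ℝ) :
    (taylorPolynomial f p m).totalDegree ≤ p := by
  refine MvPolynomial.totalDegree_finsetSum_le fun j hj => ?_
  calc _ ≤ _ := MvPolynomial.totalDegree_smul_le _ _
    _ ≤ j := totalDegree_diagPolynomial_le _ _
    _ ≤ p := Finset.mem_range_succ_iff.1 hj

end Multilinear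

section PartialDeriv

variable {d : ℕ} {f g : (Fin d → ℝ) → ℝ} {x : Fin d → ℝ}

theorem partialDerivCoord_eq_fderiv (i : Fin d) (hf : DifferentiableAt ℝ f x) :
    partialDerivCoord d i f x = fderiv ℝ f x (Pi.single i 1) := by
  have hf' : HasFDerivAt f (fderiv ℝ f x) (Function.update x i (x i)) := by
    rw [Function.update_eq_self]
    exact hf.hasFDerivAt
  exact (hf'.comp_hasDerivAt (x i) (hasDerivAt_update x i (x i))).deriv

theorem partialDerivCoord_congr (i : Fin d) (hfg : f =ᶠ[nhds x] g) :
    partialDerivCoord d i f x = partialDerivCoord d i g x := by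
  have hcont : Filter.Tendsto (Function.update x i) (nhds (x i)) (nhds x) := by
    simpa using (continuous_const.update i continuous_id (f := fun _ : ℝ => x)).tendsto (x i)
  exact (hfg.comp_tendsto hcont).deriv_eq

theorem partialDerivCoord_eventuallyEq_fderiv (i : Fin d) (hf : ContDiffAt ℝ 1 f x) :
    partialDerivCoord d i f =ᶠ[nhds x] fun y => fderiv ℝ f y (Pi.single i 1) :=
  (hf.eventually (by simp)).mono fun _ hy =>
    partialDerivCoord_eq_fderiv i (hy.differentiableAt one_ne_zero)

theorem contDiffAt_partialDerivCoord {n : ℕ} (i : Fin d) (hf : ContDiffAt ℝ (n + 1) f x) :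
    ContDiffAt ℝ n (partialDerivCoord d i f) x :=
  ((hf.fderiv_right le_rfl).clm_apply contDiffAt_const).congr_of_eventuallyEq
    (partialDerivCoord_eventuallyEq_fderiv i (hf.of_le (by simp)))

theorem partialDerivCoord_partialDerivCoord_eq (i j : Fin d) (hf : ContDiffAt ℝ 2 f x) :
    partialDerivCoord d i (partialDerivCoord d j f) x =
      fderiv ℝ (fderiv ℝ f) x (Pi.single i 1) (Pi.single j 1) := by
  have hf' : DifferentiableAt ℝ (fderiv ℝ f) x :=
    (hf.fderiv_right (m := 1) (by norm_num)).differentiableAt one_ne_zero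
  have hj : DifferentiableAt ℝ (fun y => fderiv ℝ f y (Pi.single j 1)) x :=
    hf'.clm_apply (differentiableAt_const _)
  rw [partialDerivCoord_congr i (partialDerivCoord_eventuallyEq_fderiv j (hf.of_le (by norm_num))),
    partialDerivCoord_eq_fderiv i hj, fderiv_clm_apply hf' (differentiableAt_const _)]
  simp

theorem partialDerivCoord_comm (i j : Fin d) (hf : ContDiffAt ℝ 2 f x) :
    partialDerivCoord d i (partialDerivCoord d j f) x =
      partialDerivCoord d j (partialDerivCoord d i f) x := by
  rw [partialDerivCoord_partialDerivCoord_eq i j hf, partialDerivCoord_partialDerivCoord_eq j i hf]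
  exact (hf.isSymmSndFDerivAt (by simp)).eq _ _

/-- The iterated partial derivative along a list of coordinates, the last entry acting first. In
contrast to a multi-index, the list remembers the order of differentiation. -/
noncomputable def partialDerivList (l : List (Fin d)) (f : (Fin d → ℝ) → ℝ) : (Fin d → ℝ) → ℝ :=
  l.foldr (partialDerivCoord d) f

theorem contDiffAt_partialDerivList {n : ℕ} (l : List (Fin d))
    (hf : ContDiffAt ℝ (n + l.length : ℕ) f x) : ContDiffAt ℝ n (partialDerivList l f) x := by
  induction l generalizing n with
  | nil => exact hf
  | cons i l ih =>
    refine contDiffAt_partialDerivCoord i ?_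
    rw [List.length_cons, ← add_assoc, Nat.add_right_comm] at hf
    exact_mod_cast ih hf

theorem partialDerivList_perm {l₁ l₂ : List (Fin d)} (hl : l₁.Perm l₂)
    (hf : ContDiffAt ℝ l₁.length f x) : partialDerivList l₁ f x = partialDerivList l₂ f x := by
  induction hl generalizing x with
  | nil => rfl
  | @cons i l₁ l₂ _ ih =>
    refine partialDerivCoord_congr i ?_
    have hf' : ContDiffAt ℝ l₁.length f x := hf.of_le (by simp)
    exact (hf'.eventually (by simp)).mono fun y hy => ih hy
  | swap i j l =>
    refine partialDerivCoord_comm j i (contDiffAt_partialDerivList (n := 2) l ?_)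
    rwa [add_comm]
  | trans hl₁₂ _ ih₁₂ ih₂₃ =>
    exact (ih₁₂ hf).trans (ih₂₃ (by rwa [← hl₁₂.length_eq]))

theorem partialDerivMulti_eq_partialDerivList (α : Fin d → ℕ) :
    partialDerivMulti d α f =
      partialDerivList ((List.finRange d).flatMap fun i => List.replicate (α i) i) f := by
  have hiter : ∀ (n : ℕ) (i : Fin d) (g : (Fin d → ℝ) → ℝ),
      (List.replicate n i).foldr (partialDerivCoord d) g = (partialDerivCoord d i)^[n] g := by
    intro n i g
    induction n with
    | zero => rfl
    | succ n ih => rw [List.replicate_succ, List.foldr_cons, ih, Function.iterate_succ_apply']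
  simp only [partialDerivMulti, partialDerivList, List.foldr_flatMap, hiter]

theorem perm_flatMap_replicate_count (l : List (Fin d)) :
    l.Perm ((List.finRange d).flatMap fun i => List.replicate (l.count i) i) := by
  rw [List.perm_iff_count]
  intro j
  rw [List.count_flatMap, ← Fin.sum_univ_def]
  simp [List.count_replicate]

theorem partialDerivMulti_count (l : List (Fin d)) (hf : ContDiffAt ℝ l.length f x) :
    partialDerivMulti d (fun i => l.count i) f x = partialDerivList l f x := by
  rw [partialDerivMulti_eq_partialDerivList,
    partialDerivList_perm (perm_flatMap_replicate_count l) hf]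

theorem partialDerivList_ofFn {n : ℕ} (r : Fin n → Fin d) (hf : ContDiffAt ℝ n f x) :
    partialDerivList (List.ofFn r) f x = iteratedFDeriv ℝ n f x fun k => Pi.single (r k) 1 := by
  induction n generalizing x with
  | zero => rfl
  | succ n ih =>
    have hdiff : DifferentiableAt ℝ (iteratedFDeriv ℝ n f) x :=
      hf.differentiableAt_iteratedFDeriv (by exact_mod_cast n.lt_succ_self)
    have htail : partialDerivList (List.ofFn fun k => r (Fin.succ k)) f =ᶠ[nhds x]
        fun y => iteratedFDeriv ℝ n f y fun k => Pi.single (r k.succ) 1 :=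
      ((hf.of_le (by simp)).eventually (by simp)).mono fun y hy => ih _ hy
    calc partialDerivList (List.ofFn r) f x
        = partialDerivCoord d (r 0)
            (partialDerivList (List.ofFn fun k => r (Fin.succ k)) f) x := by
          rw [List.ofFn_succ]
          rfl
      _ = fderiv ℝ (fun y => iteratedFDeriv ℝ n f y fun k => Pi.single (r k.succ) 1) x
            (Pi.single (r 0) 1) := by
          rw [partialDerivCoord_congr _ htail, partialDerivCoord_eq_fderiv]
          exact hdiff.continuousMultilinear_apply_const _
      _ = iteratedFDeriv ℝ (n + 1) f x fun k => Pi.single (r k) 1 :=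
          (hdiff.iteratedFDeriv_succ_apply_left' (m := fun k => Pi.single (r k) 1)).symm

theorem iteratedFDeriv_single_eq_partialDerivMulti {n : ℕ} (r : Fin n → Fin d)
    (hf : ContDiffAt ℝ n f x) :
    (iteratedFDeriv ℝ n f x fun k => Pi.single (r k) 1) =
      partialDerivMulti d (fun i => (List.ofFn r).count i) f x := by
  rw [partialDerivMulti_count _ (by rwa [List.length_ofFn]), partialDerivList_ofFn r hf]

theorem abs_sub_eval_taylorPolynomial_le {p : ℕ} {m z : Fin d → ℝ} {K : ℝ}
    (hf : ∀ t ∈ Set.Icc (0 : ℝ) 1, ContDiffAt ℝ p f (m + t • z))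
    (hK : ∀ α : Fin d → ℕ, ∑ i, α i = p → ∀ t ∈ Set.Icc (0 : ℝ) 1,
      |partialDerivMulti d α f (m + t • z) - partialDerivMulti d α f m| ≤ K * t) :
    |f (m + z) - MvPolynomial.eval (m + z) (taylorPolynomial f p m)| ≤
      (∑ i, |z i|) ^ p * K / (p + 1).factorial := by
  rw [eval_taylorPolynomial, add_sub_cancel_left]
  refine norm_map_add_sub_taylor_le hf fun t ht => ?_
  rw [mul_assoc]
  refine norm_multilinearMap_apply_diag_le (iteratedFDeriv ℝ p f (m + t • z) -
    iteratedFDeriv ℝ p f m).toMultilinearMap (fun r => ?_) z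
  have hm : ContDiffAt ℝ p f m := by simpa using hf 0 ⟨le_rfl, zero_le_one⟩
  have hα : ∑ i, (List.ofFn r).count i = p := by
    simpa using Multiset.sum_count_eq_card (m := (List.ofFn r : Multiset (Fin d)))
      fun i _ => Finset.mem_univ i
  simpa [iteratedFDeriv_single_eq_partialDerivMulti r hm,
    iteratedFDeriv_single_eq_partialDerivMulti r (hf t ht)] using hK _ hα t ht

end PartialDeriv

section PNorm

variable {d : ℕ} {h : ℝ≥0∞}

theorem pnorm_eq_norm_toLp (hh : h ≠ 0) (x : Fin d → ℝ) :
    pnorm d h x = ‖(WithLp.toLp h x : PiLp h fun _ : Fin d => ℝ)‖ := by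
  rcases eq_or_ne h ∞ with rfl | hfin
  · simp [pnorm, PiLp.norm_eq_ciSup]
  · simp [pnorm, hfin, PiLp.norm_eq_sum (ENNReal.toReal_pos hh hfin)]

theorem pnorm_smul (hh : 1 ≤ h) (t : ℝ) (x : Fin d → ℝ) :
    pnorm d h (t • x) = |t| * pnorm d h x := by
  have : Fact (1 ≤ h) := ⟨hh⟩
  have h0 : h ≠ 0 := (zero_lt_one.trans_le hh).ne'
  rw [pnorm_eq_norm_toLp h0, pnorm_eq_norm_toLp h0, WithLp.toLp_smul, norm_smul, Real.norm_eq_abs]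

theorem pnorm_le_card_rpow_mul_norm (hh : 1 ≤ h) (x : Fin d → ℝ) :
    pnorm d h x ≤ (d : ℝ) ^ (h⁻¹).toReal * ‖x‖ := by
  have : Fact (1 ≤ h) := ⟨hh⟩
  rw [pnorm_eq_norm_toLp (zero_lt_one.trans_le hh).ne']
  simpa using (PiLp.lipschitzWith_toLp h fun _ : Fin d => ℝ).norm_le_mul rfl x

end PNorm

section ErrorBound

variable {d p : ℕ} {C : ℝ} {h : ℝ≥0∞} {f : (Fin d → ℝ) → ℝ} {S : Set (Fin d → ℝ)}
  {m x : Fin d → ℝ}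

theorem abs_sub_eval_taylorPolynomial_le_pnorm (hh : 1 ≤ h) (hS : Convex ℝ S) (hm : m ∈ S)
    (hx : x ∈ S) (hf : ∀ y ∈ S, ContDiffAt ℝ p f y)
    (hlip : ∀ α : Fin d → ℕ, ∑ i, α i = p → ∀ y ∈ S, ∀ y' ∈ S,
      |partialDerivMulti d α f y - partialDerivMulti d α f y'| ≤ C * pnorm d h (y - y')) :
    |f x - MvPolynomial.eval x (taylorPolynomial f p m)| ≤
      (∑ i, |(x - m) i|) ^ p * (C * pnorm d h (x - m)) / (p + 1).factorial := by
  have hseg : ∀ t ∈ Set.Icc (0 : ℝ) 1, m + t • (x - m) ∈ S := fun t ht =>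
    hS.add_smul_sub_mem hm hx ht
  have htaylor := abs_sub_eval_taylorPolynomial_le (f := f) (p := p) (m := m) (z := x - m)
    (K := C * pnorm d h (x - m)) (fun t ht => hf _ (hseg t ht)) fun α hα t ht => by
      calc _ ≤ C * pnorm d h (m + t • (x - m) - m) := hlip α hα _ (hseg t ht) _ hm
        _ = C * pnorm d h (x - m) * t := by
          rw [add_sub_cancel_left, pnorm_smul hh, abs_of_nonneg ht.1]
          ring
  rwa [add_sub_cancel] at htaylor

theorem abs_sub_eval_taylorPolynomial_le_of_norm_sub_le (hd : 0 < d) (hC : 0 ≤ C) (hh : 1 ≤ h)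
    (hS : Convex ℝ S) (hm : m ∈ S) (hx : x ∈ S) (hf : ∀ y ∈ S, ContDiffAt ℝ p f y)
    (hlip : ∀ α : Fin d → ℕ, ∑ i, α i = p → ∀ y ∈ S, ∀ y' ∈ S,
      |partialDerivMulti d α f y - partialDerivMulti d α f y'| ≤ C * pnorm d h (y - y'))
    {r : ℝ} (hr : ‖x - m‖ ≤ r) :
    |f x - MvPolynomial.eval x (taylorPolynomial f p m)| ≤
      C / ((d : ℝ) ^ (1 - (h⁻¹).toReal) * (p + 1).factorial) * (d * r) ^ (p + 1) := by
  have hd' : (0 : ℝ) < d := Nat.cast_pos.2 hd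
  have hsum : ∑ i, |(x - m) i| ≤ d * r := by
    simpa using Finset.sum_le_card_nsmul Finset.univ _ r fun i _ =>
      (norm_le_pi_norm (x - m) i).trans hr
  have hpnorm : pnorm d h (x - m) ≤ (d : ℝ) ^ (h⁻¹).toReal * r :=
    (pnorm_le_card_rpow_mul_norm hh _).trans (by gcongr)
  calc |f x - MvPolynomial.eval x (taylorPolynomial f p m)|
      ≤ (∑ i, |(x - m) i|) ^ p * (C * pnorm d h (x - m)) / (p + 1).factorial :=
        abs_sub_eval_taylorPolynomial_le_pnorm hh hS hm hx hf hlip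
    _ ≤ (∑ i, |(x - m) i|) ^ p * (C * ((d : ℝ) ^ (h⁻¹).toReal * r)) / (p + 1).factorial := by
        gcongr
    _ ≤ (d * r) ^ p * (C * ((d : ℝ) ^ (h⁻¹).toReal * r)) / (p + 1).factorial := by
        have hr0 : 0 ≤ r := (norm_nonneg _).trans hr
        gcongr
    _ = C / ((d : ℝ) ^ (1 - (h⁻¹).toReal) * (p + 1).factorial) * (d * r) ^ (p + 1) := by
        rw [Real.rpow_sub hd', Real.rpow_one]
        field_simp
        ring

end ErrorBound

section Grid

variable {d Q : ℕ}

/-- The closed subcube with index `k` in the equidistant partition of `[0,1]^d` into `Q^d` cubes. -/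
def gridCell (k : Fin d → Fin Q) : Set (Fin d → ℝ) :=
  Set.univ.pi fun i => Set.Icc ((k i : ℝ) / Q) (((k i : ℝ) + 1) / Q)

/-- The midpoint of `gridCell k`, the centre of the Taylor expansion used on that cube. -/
noncomputable def gridCellMidpoint (k : Fin d → Fin Q) : Fin d → ℝ :=
  fun i => ((k i : ℝ) + 1 / 2) / Q

theorem gridCell_subset_unitCube (k : Fin d → Fin Q) :
    gridCell k ⊆ Set.univ.pi fun _ => Set.Icc (0 : ℝ) 1 := by
  refine Set.pi_mono fun i _ => Set.Icc_subset_Icc (by positivity) ?_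
  exact div_le_one_of_le₀ (by exact_mod_cast (k i).isLt) Q.cast_nonneg

theorem gridCellMidpoint_mem_gridCell (k : Fin d → Fin Q) : gridCellMidpoint k ∈ gridCell k := by
  refine fun i _ => ⟨?_, ?_⟩ <;> simp only [gridCellMidpoint] <;> gcongr <;> norm_num

theorem norm_sub_gridCellMidpoint_le {k : Fin d → Fin Q} {x : Fin d → ℝ} (hx : x ∈ gridCell k) :
    ‖x - gridCellMidpoint k‖ ≤ 1 / (2 * Q) := by
  refine (pi_norm_le_iff_of_nonneg (by positivity)).2 fun i => ?_
  obtain ⟨hlower, hupper⟩ := hx i trivial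
  have hhalf : gridCellMidpoint k i = (k i : ℝ) / Q + 1 / (2 * Q) := by
    rw [gridCellMidpoint, add_div, div_div]
  have hside : ((k i : ℝ) + 1) / Q = gridCellMidpoint k i + 1 / (2 * Q) := by
    rw [hhalf]
    ring
  rw [Pi.sub_apply, Real.norm_eq_abs, abs_le]
  constructor <;> linarith

end Grid

theorem piecewise_polynomial_approximation_general {d : ℕ} (hd : 0 < d) {p : ℕ} {C : ℝ}
    (hC : 0 ≤ C) {h : ℝ≥0∞} (hh : 1 ≤ h) {a : (Fin d → ℝ) → ℝ}
    (hsmooth : ∀ x : Fin d → ℝ, (∀ i, x i ∈ Set.Icc (0 : ℝ) 1) → ContDiffAt ℝ p a x)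
    (hlip : ∀ α : Fin d → ℕ, (∑ i, α i) = p →
      ∀ x y : Fin d → ℝ, (∀ i, x i ∈ Set.Icc (0 : ℝ) 1) → (∀ i, y i ∈ Set.Icc (0 : ℝ) 1) →
        |partialDerivMulti d α a x - partialDerivMulti d α a y| ≤ C * pnorm d h (x - y))
    {Q : ℕ} (k : Fin d → Fin Q) {x : Fin d → ℝ} (hx : x ∈ gridCell k) :
    |a x - MvPolynomial.eval x (taylorPolynomial a p (gridCellMidpoint k))| ≤
      C / ((d : ℝ) ^ (1 - (h⁻¹).toReal) * (Nat.factorial (p + 1))) *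
        ((d : ℝ) / (2 * Q)) ^ (p + 1) := by
  rw [← mul_one_div (d : ℝ)]
  exact abs_sub_eval_taylorPolynomial_le_of_norm_sub_le hd hC hh
    (convex_pi fun _ _ => convex_Icc (0 : ℝ) 1)
    (gridCell_subset_unitCube k (gridCellMidpoint_mem_gridCell k))
    (gridCell_subset_unitCube k hx) (fun y hy => hsmooth y fun i => hy i trivial)
    (fun α hα y hy y' hy' => hlip α hα y y' (fun i => hy i trivial) fun i => hy' i trivial)
    (norm_sub_gridCellMidpoint_le hx)

/-- Lemma 7.1: a `(p+1,C)`-smooth (w.r.t. `|·|_h`) function `a` on `[0,1]^d` is uniformly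
approximated, on each cube of the equidistant partition of `[0,1]^d` into `Q^d` cubes, by a
polynomial of total degree `≤ p` with error at most `(C/(d^{1-1/h}(p+1)!)) (d/(2Q))^{p+1}`. -/
theorem piecewise_polynomial_approximation
    (d : ℕ) (hd : 0 < d) (p : ℕ) (C : ℝ) (hC : 0 < C) (h : ℝ≥0∞) (hh : 1 ≤ h)
    (Q : ℕ) (hQ : 0 < Q) (a : (Fin d → ℝ) → ℝ)
    (hsmooth : ContDiff ℝ (p : ℕ∞) a)
    (hlip : ∀ α : Fin d → ℕ, (∑ i, α i) = p →
      ∀ x y : Fin d → ℝ, (∀ i, x i ∈ Set.Icc (0 : ℝ) 1) → (∀ i, y i ∈ Set.Icc (0 : ℝ) 1) →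
        |partialDerivMulti d α a x - partialDerivMulti d α a y| ≤ C * pnorm d h (x - y)) :
    ∃ P : (Fin d → Fin Q) → MvPolynomial (Fin d) ℝ,
      (∀ k, (P k).totalDegree ≤ p) ∧
      ∀ x : Fin d → ℝ, (∀ i, x i ∈ Set.Icc (0 : ℝ) 1) →
        ∀ k : Fin d → Fin Q,
          (∀ i, (k i : ℝ) / Q ≤ x i ∧ x i ≤ ((k i : ℝ) + 1) / Q) →
            |a x - MvPolynomial.eval x (P k)| ≤
              C / ((d : ℝ) ^ (1 - (h⁻¹).toReal) * (Nat.factorial (p + 1))) *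
                ((d : ℝ) / (2 * Q)) ^ (p + 1) := by
  have hsmooth' : ContDiff ℝ p a := by exact_mod_cast hsmooth
  exact ⟨fun k => taylorPolynomial a p (gridCellMidpoint k),
    fun k => totalDegree_taylorPolynomial_le a p _, fun x _ k hk =>
      piecewise_polynomial_approximation_general hd hC.le hh (fun y _ => hsmooth'.contDiffAt) hlip
        k fun i _ => hk i⟩
end

section
/- Let d ∈ ℕ and p ∈ ℕ₀ satisfy 2(p+1) ≤ d (i.e. p ≤ (d−2)/2). Let ε ∈ (0,1] and let real numbers J, Q, R, N₀ ≥ 1 satisfy J ≥ ε^{−1/2}, R ≥ 1 and (J/N₀)(R/Q)^{2(p+1)} ≤ ε². Then J Q^d N₀ ≥ ε^{−3}. (Consequently, in this parameter regime the cost of the RCV algorithm is at least of order ε^{−3}, worse than the ε^{−2.5} complexity of the standard Monte Carlo algorithm with a second-order scheme.) -/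
/-!
The factor `(R / Q) ^ (2 * (p + 1))` decays in `Q` no faster than the number of cubes `Q ^ d` grows,
so the variance constraint gives `J / (Q ^ d * N₀) ≤ ε ^ 2`. Hence the cost satisfies
`J * Q ^ d * N₀ ≥ J ^ 2 / ε ^ 2`, and the bias constraint bounds `J` from below.
-/

theorem div_pow_mul_le_of_div_mul_div_pow_le {K : Type*} [Field K] [LinearOrder K]
    [IsStrictOrderedRing K] {k d : ℕ} (hkd : k ≤ d) {J Q R N δ : K} (hJ : 0 ≤ J) (hQ : 1 ≤ Q)
    (hR : 1 ≤ R) (hN : 0 ≤ N) (hδ : J / N * (R / Q) ^ k ≤ δ) :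
    J / (Q ^ d * N) ≤ δ := by
  calc J / (Q ^ d * N) = J / N * (1 / Q) ^ d := by
        rw [one_div_pow, mul_one_div, div_div, mul_comm N]
    _ ≤ J / N * (1 / Q) ^ k := by
        gcongr ?_ * ?_
        exact pow_le_pow_of_le_one (by positivity) (div_le_one_of_le₀ hQ (by positivity)) hkd
    _ ≤ J / N * (R / Q) ^ k := by gcongr
    _ ≤ δ := hδ

theorem rpow_neg_two_mul_add_two {ε : ℝ} (hε : 0 < ε) (α : ℝ) :
    ε ^ (-(2 * α + 2)) = (ε ^ (-α)) ^ 2 / ε ^ 2 := by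
  rw [← Real.rpow_mul_natCast hε.le, ← Real.rpow_natCast ε 2, ← Real.rpow_sub hε]
  congr 1
  push_cast
  ring

/-- Here `1 / α` is the weak order of the scheme and `k` the decay exponent of the squared
approximation error. -/
theorem rcv_cost_lower_bound_small_p_general {d k : ℕ} (hkd : k ≤ d) {α ε J Q R N₀ : ℝ}
    (hε : 0 < ε) (hQ : 1 ≤ Q) (hR : 1 ≤ R) (hN₀ : 0 < N₀) (hJ : ε ^ (-α) ≤ J)
    (hconstr : J / N₀ * (R / Q) ^ k ≤ ε ^ 2) :
    ε ^ (-(2 * α + 2)) ≤ J * Q ^ d * N₀ := by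
  have hJ0 : 0 ≤ J := (Real.rpow_nonneg hε.le _).trans hJ
  have hJ_le : J ≤ ε ^ 2 * (Q ^ d * N₀) :=
    (div_le_iff₀ (by positivity)).mp
      (div_pow_mul_le_of_div_mul_div_pow_le hkd hJ0 hQ hR hN₀.le hconstr)
  calc ε ^ (-(2 * α + 2)) = (ε ^ (-α)) ^ 2 / ε ^ 2 := rpow_neg_two_mul_add_two hε α
    _ ≤ J ^ 2 / ε ^ 2 := by gcongr
    _ = J * J / ε ^ 2 := by rw [sq J]
    _ ≤ J * (ε ^ 2 * (Q ^ d * N₀)) / ε ^ 2 := by gcongr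
    _ = J * Q ^ d * N₀ := by field_simp

/-- Lower complexity bound for the RCV algorithm when `p ≤ (d-2)/2`: if `2(p+1) ≤ d`,
`J ≥ ε^{-1/2}`, `J, Q, R, N₀ ≥ 1` and `(J/N₀)(R/Q)^{2(p+1)} ≤ ε²`, then
`J Q^d N₀ ≥ ε^{-3}`. -/
theorem rcv_cost_lower_bound_small_p
    (d p : ℕ) (hd : 0 < d) (hpd : 2 * (p + 1) ≤ d)
    (ε : ℝ) (hε0 : 0 < ε) (hε1 : ε ≤ 1)
    (J Q R N₀ : ℝ) (hJ1 : 1 ≤ J) (hQ1 : 1 ≤ Q) (hR1 : 1 ≤ R) (hN₀1 : 1 ≤ N₀)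
    (hJ : ε ^ (-(1 / 2) : ℝ) ≤ J)
    (hconstr : J / N₀ * (R / Q) ^ (2 * (p + 1)) ≤ ε ^ 2) :
    ε ^ (-(3 : ℝ)) ≤ J * Q ^ d * N₀ := by
  rw [show (3 : ℝ) = 2 * (1 / 2) + 2 by norm_num]
  exact rcv_cost_lower_bound_small_p_general hpd hε0 hQ1 hR1 (by positivity) hJ hconstr
end

section
/- Let d ∈ ℕ, p ∈ ℕ₀ with 2(p+1) > d, and let ν satisfy 0 < ν ≤ 2d(p+1)/(2(p+1) − d). Let ε ∈ (0,1] and let real numbers J, Q, R, N₀ ≥ 1 satisfy J ≥ ε^{−1/2}, (J/N₀)(R/Q)^{2(p+1)} ≤ ε², and 1/(R^ν N₀) ≤ ε². Then J Q^d N₀ ≥ ε^{−5/2}. (Consequently, in this parameter regime the cost of the RCV algorithm cannot beat the ε^{−2.5} complexity of the standard Monte Carlo algorithm with a second-order scheme.) -/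
/-!
Writing `k = 2(p+1)`, the cost per time step `Q^d N₀` interpolates between the two variance
constraints: `(Q^d N₀)^k = (Q^k N₀)^d N₀^(k-d)`. The regression constraint bounds the first factor
below by `(ε⁻² R^k)^d`, and the condition on `ν` says precisely that `R^(kd)` dominates
`(R^ν)^(k-d)`, so the tail constraint `R^ν N₀ ≥ ε⁻²` supplies the missing `ε^(-2(k-d))`. Hence
`Q^d N₀ ≥ ε⁻²`, and the bias constraint supplies the remaining factor `J ≥ ε^(-1/2)`.
-/

section Interpolation

variable {d k ν a Q R N : ℝ}

lemma rpow_mul_rpow_eq_mul_rpow_sub (hQ : 0 ≤ Q) (hN : 0 < N) :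
    (Q ^ d * N) ^ k = (Q ^ k * N) ^ d * N ^ (k - d) := by
  calc (Q ^ d * N) ^ k = (Q ^ d) ^ k * N ^ k :=
        Real.mul_rpow (Real.rpow_nonneg hQ d) hN.le
    _ = (Q ^ k) ^ d * (N ^ d * N ^ (k - d)) := by
        rw [← Real.rpow_mul hQ, mul_comm d k, Real.rpow_mul hQ, ← Real.rpow_add hN, add_sub_cancel]
    _ = (Q ^ k * N) ^ d * N ^ (k - d) := by
        rw [Real.mul_rpow (Real.rpow_nonneg hQ k) hN.le, mul_assoc]

lemma rpow_rpow_sub_le_rpow_rpow (hR : 1 ≤ R) (hdk : d < k) (hν : ν ≤ d * k / (k - d)) :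
    (R ^ ν) ^ (k - d) ≤ (R ^ k) ^ d := by
  have hR0 : 0 ≤ R := zero_le_one.trans hR
  have hexp : ν * (k - d) ≤ k * d := by
    rwa [le_div_iff₀ (sub_pos.2 hdk), mul_comm d k] at hν
  rw [← Real.rpow_mul hR0, ← Real.rpow_mul hR0]
  exact Real.rpow_le_rpow_of_exponent_le hR hexp

lemma le_rpow_mul_of_mul_rpow_le (hd : 0 ≤ d) (hdk : d < k) (hν : ν ≤ d * k / (k - d))
    (ha : 0 < a) (hQ : 0 ≤ Q) (hR : 1 ≤ R) (hN : 0 < N)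
    (hQN : a * R ^ k ≤ Q ^ k * N) (hRN : a ≤ R ^ ν * N) :
    a ≤ Q ^ d * N := by
  have hR0 : 0 ≤ R := zero_le_one.trans hR
  have hpow : a ^ k ≤ (Q ^ d * N) ^ k := by
    calc a ^ k = a ^ d * a ^ (k - d) := by rw [← Real.rpow_add ha, add_sub_cancel]
      _ ≤ a ^ d * (R ^ ν * N) ^ (k - d) := by gcongr
      _ = a ^ d * ((R ^ ν) ^ (k - d) * N ^ (k - d)) := by
          rw [Real.mul_rpow (Real.rpow_nonneg hR0 ν) hN.le]
      _ ≤ a ^ d * ((R ^ k) ^ d * N ^ (k - d)) := by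
          gcongr ?_ * (?_ * _)
          exact rpow_rpow_sub_le_rpow_rpow hR hdk hν
      _ = (a * R ^ k) ^ d * N ^ (k - d) := by
          rw [Real.mul_rpow ha.le (Real.rpow_nonneg hR0 k), mul_assoc]
      _ ≤ (Q ^ k * N) ^ d * N ^ (k - d) := by gcongr
      _ = (Q ^ d * N) ^ k := (rpow_mul_rpow_eq_mul_rpow_sub hQ hN).symm
  exact (Real.rpow_le_rpow_iff ha.le (by positivity) (hd.trans_lt hdk)).1 hpow

end Interpolation

lemma inv_mul_rpow_le_of_div_mul_div_rpow_le {J N Q R k δ : ℝ} (hJ : 1 ≤ J) (hN : 0 < N)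
    (hQ : 0 < Q) (hR : 0 ≤ R) (hδ : 0 < δ) (h : J / N * (R / Q) ^ k ≤ δ) :
    δ⁻¹ * R ^ k ≤ Q ^ k * N := by
  rw [Real.div_rpow hR hQ.le, div_mul_div_comm, div_le_iff₀ (by positivity)] at h
  rw [inv_mul_le_iff₀ hδ]
  calc R ^ k ≤ J * R ^ k := le_mul_of_one_le_left (by positivity) hJ
    _ ≤ δ * (N * Q ^ k) := h
    _ = δ * (Q ^ k * N) := by rw [mul_comm N]

/-- `1 / α` is the weak order of the time discretisation; piecewise polynomials of degree `p` have
`k = 2(p+1)`. -/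
theorem rcv_cost_lower_bound_small_nu_general {d k ν α ε J Q R N₀ : ℝ}
    (hd : 0 ≤ d) (hdk : d < k) (hν : ν ≤ d * k / (k - d)) (hε : 0 < ε)
    (hJ1 : 1 ≤ J) (hQ : 0 < Q) (hR : 1 ≤ R) (hN₀ : 0 < N₀) (hJ : ε ^ (-α) ≤ J)
    (hreg : J / N₀ * (R / Q) ^ k ≤ ε ^ 2) (htail : 1 / (R ^ ν * N₀) ≤ ε ^ 2) :
    ε ^ (-(α + 2)) ≤ J * Q ^ d * N₀ := by
  have hR0 : 0 < R := zero_lt_one.trans_le hR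
  have hε2 : 0 < ε ^ 2 := pow_pos hε 2
  have hreg' : (ε ^ 2)⁻¹ * R ^ k ≤ Q ^ k * N₀ :=
    inv_mul_rpow_le_of_div_mul_div_rpow_le hJ1 hN₀ hQ hR0.le hε2 hreg
  have htail' : (ε ^ 2)⁻¹ ≤ R ^ ν * N₀ :=
    inv_le_of_inv_le₀ (by positivity) (by rwa [one_div] at htail)
  have hstep : (ε ^ 2)⁻¹ ≤ Q ^ d * N₀ :=
    le_rpow_mul_of_mul_rpow_le hd hdk hν (inv_pos.2 hε2) hQ.le hR hN₀ hreg' htail'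
  calc ε ^ (-(α + 2)) = ε ^ (-α) * (ε ^ 2)⁻¹ := by
        rw [neg_add, Real.rpow_add hε, Real.rpow_neg hε.le 2, Real.rpow_two]
    _ ≤ J * (Q ^ d * N₀) := by gcongr
    _ = J * Q ^ d * N₀ := (mul_assoc ..).symm

/-- Lower complexity bound for the RCV algorithm when `p > (d-2)/2` but the tail exponent is
small, `0 < ν ≤ 2d(p+1)/(2(p+1)-d)`: if `J ≥ ε^{-1/2}`, `J, Q, R, N₀ ≥ 1`,
`(J/N₀)(R/Q)^{2(p+1)} ≤ ε²` and `1/(R^ν N₀) ≤ ε²`, then `J Q^d N₀ ≥ ε^{-5/2}`. -/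
theorem rcv_cost_lower_bound_small_nu
    (d p : ℕ) (hd : 0 < d) (hpd : (d : ℝ) < 2 * (p + 1))
    (ν : ℝ) (hν0 : 0 < ν)
    (hν : ν ≤ 2 * d * (p + 1) / (2 * ((p : ℝ) + 1) - d))
    (ε : ℝ) (hε0 : 0 < ε) (hε1 : ε ≤ 1)
    (J Q R N₀ : ℝ) (hJ1 : 1 ≤ J) (hQ1 : 1 ≤ Q) (hR1 : 1 ≤ R) (hN₀1 : 1 ≤ N₀)
    (hJ : ε ^ (-(1 / 2) : ℝ) ≤ J)
    (hconstr1 : J / N₀ * (R / Q) ^ (2 * (p + 1)) ≤ ε ^ 2)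
    (hconstr2 : 1 / (R ^ ν * N₀) ≤ ε ^ 2) :
    ε ^ (-(5 / 2) : ℝ) ≤ J * Q ^ d * N₀ := by
  have hreg : J / N₀ * (R / Q) ^ (2 * ((p : ℝ) + 1)) ≤ ε ^ 2 := by exact_mod_cast hconstr1
  have hcost := rcv_cost_lower_bound_small_nu_general (Nat.cast_nonneg d) hpd
    (hν.trans_eq (by ring)) hε0 hJ1 (by positivity) hR1 (by positivity) hJ hreg hconstr2
  rwa [Real.rpow_natCast, show (1 / 2 + 2 : ℝ) = 5 / 2 by norm_num] at hcost
end
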